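/- arXiv:2008.00221 — 2 statements merged into one kernel-verified Lean document; each statement's English description precedes it below -/
import Mathlib

section
/- The operator U_C : L²(𝕋) → L²(ℝ) defined by (U_C f)(x) = π^{-1/2}(x+i)^{-1} f((x-i)/(x+i)) is unitary and maps the Hardy space H²(𝕋) onto the Hardy space H²(ℝ). -/
open MeasureTheory Real AddCircle

open scoped FourierTransform

noncomputable section

local instance : Fact (0 < 2 * π) := ⟨Real.two_pi_pos⟩

/-- `L²` of the circle (with normalized Haar measure). -/
abbrev L2T := Lp ℂ 2 (@haarAddCircle (2 * π) _)

/-!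
The Cayley transform `C` pushes the Cauchy distribution `π⁻¹ (1 + x²)⁻¹ dx` forward to Haar
measure: for `n ≠ 0` the product of `C ^ n` with the Cauchy density is a multiple of the derivative
of `C ^ n`, and `C` tends to `1` at both ends of the line. The squared modulus of the weight of
`U_C` is exactly this density, so `U_C` is isometric, and it is onto because `C` is injective.

`U_C` maps the `n`-th Fourier monomial to `π^{-1/2} (x + i)⁻¹ C ^ n`. For `n ≥ 0` this is a
polynomial in `(x + i)⁻¹` without constant term, hence the inverse Fourier transform of a polynomial
times an exponential on the positive half-line. Complex conjugation exchanges the exponents `n` and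
`-n - 1`. Thus the Fourier transform carries the images of the monomials to an orthonormal basis of
`L²(ℝ)`, each member of which lives on a half-line, and a function vanishes on the negative
half-line exactly when it is orthogonal to the members living there.
-/

open Filter Topology
open Complex (I)
open scoped ENNReal ComplexConjugate

section VanishingOnASet

variable {α ι 𝕜 E : Type*} [MeasurableSpace α] {μ : Measure α} [RCLike 𝕜]
  [NormedAddCommGroup E] [InnerProductSpace 𝕜 E]

lemma eq_zero_of_forall_hilbertBasis_inner_eq_zero {H : Type*} [NormedAddCommGroup H]
    [InnerProductSpace 𝕜 H] (b : HilbertBasis ι 𝕜 H) {x : H} (h : ∀ i, inner 𝕜 (b i) x = 0) :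
    x = 0 := by
  refine b.repr.map_eq_zero_iff.1 (lp.ext <| funext fun i ↦ ?_)
  rw [b.repr_apply_apply, h i, lp.coeFn_zero, Pi.zero_apply]

lemma L2_inner_eq_zero_of_ae {f g : Lp E 2 μ} (h : ∀ᵐ x ∂μ, f x = 0 ∨ g x = 0) :
    inner 𝕜 f g = 0 := by
  rw [L2.inner_def]
  refine integral_eq_zero_of_ae (h.mono fun x hx ↦ ?_)
  rcases hx with hx | hx <;> simp [hx]

theorem ae_eq_zero_on_iff_forall_inner_eq_zero (b : HilbertBasis ι 𝕜 (Lp E 2 μ)) {P : Set ι}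
    {S : Set α} (hS : MeasurableSet S)
    (h_on : ∀ i ∉ P, ∀ᵐ x ∂μ, x ∈ S → b i x = 0)
    (h_off : ∀ i ∈ P, ∀ᵐ x ∂μ, x ∉ S → b i x = 0) (g : Lp E 2 μ) :
    (∀ᵐ x ∂μ, x ∈ S → g x = 0) ↔ ∀ i ∈ P, inner 𝕜 (b i) g = 0 := by
  refine ⟨fun hg i hi ↦ L2_inner_eq_zero_of_ae ?_, fun hg ↦ ?_⟩
  · filter_upwards [hg, h_off i hi] with x hgx hbx
    exact (em (x ∈ S)).symm.imp hbx hgx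
  let w : Lp E 2 μ := ((Lp.memLp g).indicator hS).toLp
  have hw : w =ᵐ[μ] S.indicator g := MemLp.coeFn_toLp _
  have hw_zero : w = 0 := eq_zero_of_forall_hilbertBasis_inner_eq_zero b fun i ↦ by
    by_cases hi : i ∈ P
    · have h_sub : inner 𝕜 (b i) (w - g) = 0 := L2_inner_eq_zero_of_ae <| by
        filter_upwards [hw, Lp.coeFn_sub w g, h_off i hi] with x hwx hsub hbx
        by_cases hx : x ∈ S
        · exact .inr (by rw [hsub, Pi.sub_apply, hwx, Set.indicator_of_mem hx, sub_self])
        · exact .inl (hbx hx)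
      rwa [inner_sub_right, hg i hi, sub_zero] at h_sub
    · refine L2_inner_eq_zero_of_ae ?_
      filter_upwards [hw, h_on i hi] with x hwx hbx
      exact (em (x ∈ S)).imp hbx fun hx ↦ by simp [hwx, hx]
  filter_upwards [hw, Lp.coeFn_zero E 2 μ] with x hwx hzero hx
  rw [← Set.indicator_of_mem hx g, ← hwx, hw_zero, hzero, Pi.zero_apply]

end VanishingOnASet

section WeightedComposition

variable {α β 𝕜 E : Type*} [MeasurableSpace α] [MeasurableSpace β] [RCLike 𝕜]
  [NormedAddCommGroup E] [NormedSpace 𝕜 E] {p : ℝ≥0∞} {μ : Measure α} {ν : Measure β}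
  {w : α → 𝕜} {θ : α → β} {σ : β → α}

lemma eLpNorm_smul_eq_eLpNorm_withDensity (hp : p ≠ ∞) (hw : Measurable w) (g : α → E) :
    eLpNorm (fun x ↦ w x • g x) p μ =
      eLpNorm g p (μ.withDensity fun x ↦ ‖w x‖ₑ ^ p.toReal) := by
  rcases eq_or_ne p 0 with rfl | hp0
  · simp only [eLpNorm_exponent_zero]
  rw [eLpNorm_eq_lintegral_rpow_enorm_toReal hp0 hp, eLpNorm_eq_lintegral_rpow_enorm_toReal hp0 hp,
    lintegral_withDensity_eq_lintegral_mul_non_measurable _ (hw.enorm.pow_const _)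
      (Eventually.of_forall fun x ↦ by finiteness)]
  simp_rw [Pi.mul_apply, enorm_smul, ENNReal.mul_rpow_of_nonneg _ _ ENNReal.toReal_nonneg]

/-- The data of a norm-preserving weighted substitution `f ↦ w • f ∘ θ` from `Lp E p ν` to
`Lp E p μ`: the density `‖w‖ ^ p` turns `μ` into a measure that `θ` pushes forward to `ν`. The
weight vanishes nowhere, so that `θ` pulls `ν`-null sets back to `μ`-null sets. -/
structure IsWeightedSubstitution (p : ℝ≥0∞) (w : α → 𝕜) (θ : α → β) (μ : Measure α)
    (ν : Measure β) : Prop where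
  ne_top : p ≠ ∞
  measurable_weight : Measurable w
  weight_ne_zero : ∀ x, w x ≠ 0
  measurePreserving : MeasurePreserving θ (μ.withDensity fun x ↦ ‖w x‖ₑ ^ p.toReal) ν

namespace IsWeightedSubstitution

lemma quasiMeasurePreserving (h : IsWeightedSubstitution p w θ μ ν) :
    Measure.QuasiMeasurePreserving θ μ ν :=
  h.measurePreserving.quasiMeasurePreserving.mono_left <|
    withDensity_absolutelyContinuous' (h.measurable_weight.enorm.pow_const _).aemeasurable
      (Eventually.of_forall fun x ↦ by simp [h.weight_ne_zero x])

lemma eLpNorm_smul_comp (h : IsWeightedSubstitution p w θ μ ν) {f : β → E}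
    (hf : AEStronglyMeasurable f ν) : eLpNorm (fun x ↦ w x • f (θ x)) p μ = eLpNorm f p ν := by
  rw [eLpNorm_smul_eq_eLpNorm_withDensity h.ne_top h.measurable_weight]
  exact eLpNorm_comp_measurePreserving hf h.measurePreserving

lemma memLp_smul_comp (h : IsWeightedSubstitution p w θ μ ν) {f : β → E} (hf : MemLp f p ν) :
    MemLp (fun x ↦ w x • f (θ x)) p μ :=
  ⟨h.measurable_weight.aestronglyMeasurable.smul
    (hf.1.comp_quasiMeasurePreserving h.quasiMeasurePreserving),
    (h.eLpNorm_smul_comp hf.1).trans_lt hf.2⟩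

variable [Fact (1 ≤ p)]

variable (E) in
/-- The operator `f ↦ w • f ∘ θ` as a linear isometry between `Lp` spaces. -/
def linearIsometry (h : IsWeightedSubstitution p w θ μ ν) : Lp E p ν →ₗᵢ[𝕜] Lp E p μ where
  toFun f := (h.memLp_smul_comp (Lp.memLp f)).toLp
  map_add' f g := by
    rw [← MemLp.toLp_add]
    refine MemLp.toLp_congr _ _ ?_
    filter_upwards [h.quasiMeasurePreserving.ae (Lp.coeFn_add f g)] with x hx
    simp only [hx, Pi.add_apply, smul_add]
  map_smul' c f := by
    rw [RingHom.id_apply, ← MemLp.toLp_const_smul]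
    refine MemLp.toLp_congr _ _ ?_
    filter_upwards [h.quasiMeasurePreserving.ae (Lp.coeFn_smul c f)] with x hx
    simp only [hx, Pi.smul_apply, smul_comm c]
  norm_map' f :=
    (Lp.norm_toLp _ (h.memLp_smul_comp (Lp.memLp f))).trans <| by
      rw [h.eLpNorm_smul_comp (Lp.aestronglyMeasurable f), ← Lp.norm_def]

lemma coeFn_linearIsometry (h : IsWeightedSubstitution p w θ μ ν) (f : Lp E p ν) :
    h.linearIsometry E f =ᵐ[μ] fun x ↦ w x • f (θ x) :=
  (h.memLp_smul_comp (Lp.memLp f)).coeFn_toLp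

lemma surjective_linearIsometry (h : IsWeightedSubstitution p w θ μ ν) (hσ : Measurable σ)
    (hσθ : Function.LeftInverse σ θ) : Function.Surjective (h.linearIsometry E) := by
  intro g
  obtain ⟨g', hg', hgg'⟩ := Lp.aestronglyMeasurable g
  let f : β → E := fun t ↦ (w (σ t))⁻¹ • g' (σ t)
  have hf : AEStronglyMeasurable f ν :=
    (((h.measurable_weight.comp hσ).inv.stronglyMeasurable).smul
      (hg'.comp_measurable hσ)).aestronglyMeasurable
  have hfθ (x : α) : w x • f (θ x) = g' x := by
    simp only [f, hσθ x, smul_inv_smul₀ (h.weight_ne_zero x)]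
  have hf_memLp : MemLp f p ν := by
    refine ⟨hf, ?_⟩
    rw [← h.eLpNorm_smul_comp hf]
    simp_rw [hfθ]
    exact ((memLp_congr_ae hgg').1 (Lp.memLp g)).2
  refine ⟨hf_memLp.toLp, Lp.ext ?_⟩
  filter_upwards [h.coeFn_linearIsometry hf_memLp.toLp,
    h.quasiMeasurePreserving.ae hf_memLp.coeFn_toLp, hgg'] with x hx hfx hgx
  rw [hx, hfx, hfθ, hgx]

end IsWeightedSubstitution

end WeightedComposition

section CircleMeasures

variable {T : ℝ} [Fact (0 < T)] {μ ν : Measure (AddCircle T)}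

lemma ext_of_integral_fourier [IsFiniteMeasure μ] [IsFiniteMeasure ν]
    (h : ∀ n : ℤ, ∫ t, fourier n t ∂μ = ∫ t, fourier n t ∂ν) : μ = ν := by
  have h_int (ρ : Measure (AddCircle T)) [IsFiniteMeasure ρ] (f : C(AddCircle T, ℂ)) :
      Integrable f ρ := (BoundedContinuousFunction.mkOfCompact f).integrable ρ
  have h_alg (f : C(AddCircle T, ℂ)) (hf : f ∈ fourierSubalgebra (T := T)) :
      ∫ t, f t ∂μ = ∫ t, f t ∂ν := by
    rw [← StarSubalgebra.mem_toSubalgebra, ← Subalgebra.mem_toSubmodule,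
      fourierSubalgebra_coe] at hf
    induction hf using Submodule.span_induction with
    | mem f hf => obtain ⟨n, rfl⟩ := hf; exact h n
    | zero => simp
    | add f g _ _ hf hg =>
      simp only [ContinuousMap.add_apply]
      rw [integral_add (h_int μ f) (h_int μ g), integral_add (h_int ν f) (h_int ν g), hf, hg]
    | smul c f _ hf =>
      simp only [ContinuousMap.smul_apply, integral_smul, hf]
  refine ext_of_forall_mem_subalgebra_integral_eq_of_polish (𝕜 := ℂ)
    (A := fourierSubalgebra.comap (BoundedContinuousFunction.toContinuousMapStarₐ ℂ)) ?_
    fun g hg ↦ h_alg _ hg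
  intro x y hxy
  obtain ⟨_, ⟨f, hf, rfl⟩, hfxy⟩ := fourierSubalgebra_separatesPoints hxy
  exact ⟨_, ⟨f, ⟨BoundedContinuousFunction.mkOfCompact f, hf, rfl⟩, rfl⟩, hfxy⟩

lemma eq_haarAddCircle_of_integral_fourier [IsProbabilityMeasure μ]
    (h : ∀ n : ℤ, n ≠ 0 → ∫ t, fourier n t ∂μ = 0) : μ = haarAddCircle := by
  refine ext_of_integral_fourier fun n ↦ ?_
  rcases eq_or_ne n 0 with rfl | hn
  · simp
  · rw [h n hn]
    exact (integral_eq_zero_of_add_right_eq_neg (fourier_add_half_inv_index hn Fact.out)).symm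

end CircleMeasures

section FourierUnitary

variable {V E : Type*} [NormedAddCommGroup V] [InnerProductSpace ℝ V] [FiniteDimensional ℝ V]
  [MeasurableSpace V] [BorelSpace V] [NormedAddCommGroup E] [InnerProductSpace ℂ E]

/-- An isometric automorphism of `L²` is the unitary Fourier transform if it is given by the Fourier
integral wherever that integral converges absolutely. -/
def IsFourierUnitary (F : Lp E 2 (volume : Measure V) ≃ₗᵢ[ℂ] Lp E 2 (volume : Measure V)) : Prop :=
  ∀ g : Lp E 2 (volume : Measure V), Integrable g volume → F g =ᵐ[volume] 𝓕 (g : V → E)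

namespace IsFourierUnitary

variable {F : Lp E 2 (volume : Measure V) ≃ₗᵢ[ℂ] Lp E 2 (volume : Measure V)}

lemma apply_toLp (hF : IsFourierUnitary F) {h : V → E} (h_int : Integrable h volume)
    (h_memLp : MemLp h 2 volume) :
    F h_memLp.toLp =ᵐ[volume] 𝓕 h := by
  rw [← funext (Real.fourier_congr_ae h_memLp.coeFn_toLp)]
  exact hF _ (h_int.congr h_memLp.coeFn_toLp.symm)

lemma apply_schwartzMap_toLp (hF : IsFourierUnitary F) (s : SchwartzMap V E) :
    F (s.toLp 2 volume) = (𝓕 s).toLp 2 volume := by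
  refine Lp.ext ((hF.apply_toLp s.integrable (s.memLp 2 volume)).trans ?_)
  rw [← SchwartzMap.fourier_coe]
  exact ((𝓕 s).coeFn_toLp 2 volume).symm

variable [CompleteSpace E]

lemma symm_apply (hF : IsFourierUnitary F) (g : Lp E 2 (volume : Measure V)) :
    F.symm g =
      Lp.compMeasurePreservingₗᵢ ℂ Neg.neg (Measure.measurePreserving_neg volume) (F g) := by
  refine DenseRange.induction_on
    (SchwartzMap.denseRange_toLpCLM (F := E) (p := 2) (μ := (volume : Measure V))
      ENNReal.ofNat_ne_top) g
    (isClosed_eq F.symm.continuous ((LinearIsometry.continuous _).comp F.continuous)) fun s ↦ ?_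
  have h_symm : F.symm (s.toLp 2 volume) = (𝓕⁻ s).toLp 2 volume := by
    rw [LinearIsometryEquiv.symm_apply_eq, hF.apply_schwartzMap_toLp,
      FourierTransform.fourier_fourierInv_eq]
  rw [SchwartzMap.toLpCLM_apply, h_symm, hF.apply_schwartzMap_toLp]
  have h_neg := Measure.measurePreserving_neg (volume : Measure V)
  refine Lp.ext (((𝓕⁻ s).coeFn_toLp 2 volume).trans ?_)
  filter_upwards [Lp.coeFn_compMeasurePreserving ((𝓕 s).toLp 2 volume) h_neg,
    h_neg.quasiMeasurePreserving.ae ((𝓕 s).coeFn_toLp 2 volume)] with x hx hsx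
  rw [SchwartzMap.fourierInv_coe, Real.fourierInv_eq_fourier_neg, ← SchwartzMap.fourier_coe, ← hsx]
  exact hx.symm

lemma symm_apply_ae (hF : IsFourierUnitary F) {g : Lp E 2 (volume : Measure V)}
    (hg : Integrable g volume) :
    F.symm g =ᵐ[volume] 𝓕⁻ (g : V → E) := by
  rw [hF.symm_apply]
  refine (Lp.coeFn_compMeasurePreserving _ _).trans ?_
  filter_upwards [(Measure.measurePreserving_neg (volume : Measure V)).quasiMeasurePreserving.ae
    (hF g hg)] with x hx
  rw [Function.comp_apply, hx, Real.fourierInv_eq_fourier_neg]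

lemma apply_ae_of_ae_eq_fourierInv (hF : IsFourierUnitary F)
    {g : Lp E 2 (volume : Measure V)} {h : V → E} (h_int : Integrable h volume)
    (h_memLp : MemLp h 2 volume) (hg : g =ᵐ[volume] 𝓕⁻ h) :
    F g =ᵐ[volume] h := by
  suffices g = F.symm h_memLp.toLp by
    rw [this, F.apply_symm_apply]
    exact h_memLp.coeFn_toLp
  refine Lp.ext (hg.trans ?_)
  rw [← funext (Real.fourierInv_congr_ae h_memLp.coeFn_toLp)]
  exact (hF.symm_apply_ae (h_int.congr h_memLp.coeFn_toLp.symm)).symm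

end IsFourierUnitary

end FourierUnitary

section FourierSupport

variable {V E : Type*} [NormedAddCommGroup V] [InnerProductSpace ℝ V] [FiniteDimensional ℝ V]
  [MeasurableSpace V] [BorelSpace V] [NormedAddCommGroup E] [NormedSpace ℂ E]

/-- `u` is the inverse Fourier integral of a function in `L¹ ∩ L²` that vanishes outside `S`; `u`
itself need not be integrable. -/
def HasFourierSupportIn (S : Set V) (u : V → E) : Prop :=
  ∃ h : V → E, Integrable h volume ∧ MemLp h 2 volume ∧ (∀ t ∉ S, h t = 0) ∧ 𝓕⁻ h = u

namespace HasFourierSupportIn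

variable {S : Set V} {u v : V → E}

lemma add (hu : HasFourierSupportIn S u) (hv : HasFourierSupportIn S v) :
    HasFourierSupportIn S (u + v) := by
  obtain ⟨f, hf, hf2, hfS, rfl⟩ := hu
  obtain ⟨g, hg, hg2, hgS, rfl⟩ := hv
  refine ⟨f + g, hf.add hg, hf2.add hg2, fun t ht ↦ by simp [hfS t ht, hgS t ht], ?_⟩
  exact VectorFourier.fourierIntegral_add continuous_fourierChar
    (-innerSL ℝ (E := V)).continuous₂ hf hg

lemma const_smul (c : ℂ) (hu : HasFourierSupportIn S u) : HasFourierSupportIn S (c • u) := by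
  obtain ⟨f, hf, hf2, hfS, rfl⟩ := hu
  refine ⟨c • f, hf.smul c, hf2.const_smul c, fun t ht ↦ by simp [hfS t ht], ?_⟩
  exact VectorFourier.fourierIntegral_const_smul _ _ _ _ _

lemma star {u : V → ℂ} (hu : HasFourierSupportIn S u) : HasFourierSupportIn (-S) (star u) := by
  obtain ⟨f, hf, hf2, hfS, rfl⟩ := hu
  have h_neg := Measure.measurePreserving_neg (volume : Measure V)
  refine ⟨fun t ↦ conj (f (-t)), Complex.conjLIE.integrable_comp_iff.2 hf.comp_neg,
    (hf2.comp_measurePreserving h_neg).star, fun t ht ↦ by simp only [hfS (-t) ht, map_zero], ?_⟩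
  funext x
  rw [Pi.star_apply, RCLike.star_def, Real.fourierInv_eq_fourier_comp_neg, Real.fourier_eq',
    Real.fourierInv_eq', ← integral_conj]
  congr with t
  rw [neg_neg, smul_eq_mul, smul_eq_mul, map_mul, ← Complex.exp_conj, map_mul, Complex.conj_ofReal,
    Complex.conj_I]
  simp

end HasFourierSupportIn

lemma IsFourierUnitary.apply_ae_eq_zero_of_hasFourierSupportIn {E : Type*} [NormedAddCommGroup E]
    [InnerProductSpace ℂ E] [CompleteSpace E]
    {F : Lp E 2 (volume : Measure V) ≃ₗᵢ[ℂ] Lp E 2 (volume : Measure V)} (hF : IsFourierUnitary F)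
    {g : Lp E 2 (volume : Measure V)} {S : Set V} {u : V → E} (hu : HasFourierSupportIn S u)
    (hg : g =ᵐ[volume] u) : ∀ᵐ ξ ∂volume, ξ ∉ S → F g ξ = 0 := by
  obtain ⟨h, h_int, h_memLp, hS, rfl⟩ := hu
  filter_upwards [hF.apply_ae_of_ae_eq_fourierInv h_int h_memLp hg] with ξ hξ hξS
  rw [hξ, hS ξ hξS]

end FourierSupport

section GammaKernel

variable {a : ℂ}

/-- The causal exponential monomial `t ^ k * e ^ (-a t)` on `t > 0`, whose Fourier transforms are
powers of inverse linear functions. -/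
def gammaKernel (k : ℕ) (a : ℂ) : ℝ → ℂ :=
  (Set.Ioi 0).indicator fun t : ℝ ↦ (t : ℂ) ^ k * Complex.exp (-a * t)

lemma integrableOn_pow_mul_exp_neg_mul_Ioi (k : ℕ) (ha : 0 < a.re) :
    IntegrableOn (fun t : ℝ ↦ (t : ℂ) ^ k * Complex.exp (-a * t)) (Set.Ioi 0) volume := by
  have h_real := integrableOn_rpow_mul_exp_neg_mul_rpow (s := k)
    (neg_one_lt_zero.trans_le k.cast_nonneg) one_pos ha
  exact Integrable.mono h_real (by fun_prop) (ae_of_all _ fun t ↦ by simp [Complex.norm_exp])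

lemma tendsto_pow_mul_exp_neg_mul_atTop (k : ℕ) (ha : 0 < a.re) :
    Tendsto (fun t : ℝ ↦ (t : ℂ) ^ k * Complex.exp (-a * t)) atTop (𝓝 0) := by
  rw [tendsto_zero_iff_norm_tendsto_zero]
  refine (tendsto_rpow_mul_exp_neg_mul_atTop_nhds_zero k a.re ha).congr' ?_
  filter_upwards [eventually_gt_atTop 0] with t ht
  simp [Complex.norm_exp, abs_of_pos ht]

lemma integral_pow_succ_mul_exp_neg_mul_Ioi (k : ℕ) (ha : 0 < a.re) :
    ∫ t in Set.Ioi (0 : ℝ), (t : ℂ) ^ (k + 1) * Complex.exp (-a * t) =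
      a⁻¹ * ((k + 1) * ∫ t in Set.Ioi (0 : ℝ), (t : ℂ) ^ k * Complex.exp (-a * t)) := by
  have ha0 : a ≠ 0 := by rintro rfl; simp at ha
  have h_deriv (t : ℝ) : HasDerivAt (fun t : ℝ ↦ (t : ℂ) ^ (k + 1) * Complex.exp (-a * t))
      ((k + 1) * ((t : ℂ) ^ k * Complex.exp (-a * t)) -
        a * ((t : ℂ) ^ (k + 1) * Complex.exp (-a * t))) t := by
    have h_id : HasDerivAt (fun t : ℝ ↦ (t : ℂ)) 1 t := (hasDerivAt_id t).ofReal_comp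
    refine ((h_id.fun_pow (k + 1)).mul (h_id.const_mul (-a)).cexp).congr_deriv ?_
    push_cast [Nat.add_sub_cancel]
    ring
  have h_int := (integrableOn_pow_mul_exp_neg_mul_Ioi k ha).const_mul ((k : ℂ) + 1)
  have h_int_succ := (integrableOn_pow_mul_exp_neg_mul_Ioi (k + 1) ha).const_mul a
  have h_ftc := integral_Ioi_of_hasDerivAt_of_tendsto
    (h_deriv 0).continuousAt.continuousWithinAt (fun t _ ↦ h_deriv t) (h_int.sub h_int_succ)
    (tendsto_pow_mul_exp_neg_mul_atTop (k + 1) ha)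
  rw [integral_sub h_int h_int_succ, integral_const_mul, integral_const_mul] at h_ftc
  rw [eq_inv_mul_iff_mul_eq₀ ha0, ← sub_eq_zero, ← neg_eq_zero, neg_sub, h_ftc]
  simp

lemma integral_pow_mul_exp_neg_mul_Ioi (k : ℕ) (ha : 0 < a.re) :
    ∫ t in Set.Ioi (0 : ℝ), (t : ℂ) ^ k * Complex.exp (-a * t) = k.factorial * a⁻¹ ^ (k + 1) := by
  induction k with
  | zero => simpa using integral_exp_mul_complex_Ioi (a := -a) (by simpa using ha) 0
  | succ k ih =>
    rw [integral_pow_succ_mul_exp_neg_mul_Ioi k ha, ih]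
    push_cast [Nat.factorial_succ]
    ring

lemma integrable_gammaKernel (k : ℕ) (ha : 0 < a.re) : Integrable (gammaKernel k a) volume :=
  (integrable_indicator_iff measurableSet_Ioi).2 (integrableOn_pow_mul_exp_neg_mul_Ioi k ha)

lemma gammaKernel_pow_two (k : ℕ) (a : ℂ) (t : ℝ) :
    gammaKernel k a t ^ 2 = gammaKernel (k * 2) (2 * a) t := by
  simp only [gammaKernel, Set.indicator_apply]
  split_ifs
  · rw [mul_pow, ← pow_mul, ← Complex.exp_nat_mul]
    ring_nf
  · exact zero_pow two_ne_zero

lemma memLp_two_gammaKernel (k : ℕ) (ha : 0 < a.re) : MemLp (gammaKernel k a) 2 volume := by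
  rw [memLp_two_iff_integrable_sq_norm (integrable_gammaKernel k ha).aestronglyMeasurable]
  simp_rw [← norm_pow, gammaKernel_pow_two]
  exact (integrable_gammaKernel (k * 2) (by simpa using ha)).norm

lemma fourierInv_gammaKernel (k : ℕ) (ha : 0 < a.re) (x : ℝ) :
    𝓕⁻ (gammaKernel k a) x = k.factorial * (a - 2 * π * I * x)⁻¹ ^ (k + 1) := by
  have h_modulate (t : ℝ) : Complex.exp (↑(2 * π * inner ℝ t x) * I) • gammaKernel k a t =
      gammaKernel k (a - 2 * π * I * x) t := by
    simp only [gammaKernel, Set.indicator_apply]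
    split_ifs
    · rw [smul_eq_mul, mul_left_comm, ← Complex.exp_add]
      congr 2
      simp
      ring
    · exact smul_zero _
  rw [Real.fourierInv_eq', integral_congr_ae (ae_of_all _ h_modulate), gammaKernel,
    integral_indicator measurableSet_Ioi, integral_pow_mul_exp_neg_mul_Ioi]
  simpa using ha

end GammaKernel

section CayleyTransform

open ProbabilityTheory

/-- The Cayley transform, which maps the upper half plane onto the unit disk. -/
def cayley (z : ℂ) : ℂ := (z - I) / (z + I)

lemma cayley_eq_one_sub {z : ℂ} (hz : z + I ≠ 0) : cayley z = 1 - 2 * I * (z + I)⁻¹ := by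
  rw [cayley]
  field_simp
  ring

lemma hasDerivAt_cayley {z : ℂ} (hz : z + I ≠ 0) :
    HasDerivAt cayley (2 * I * (z + I)⁻¹ ^ 2) z := by
  refine (((hasDerivAt_id z).sub_const I).div ((hasDerivAt_id z).add_const I) hz).congr_deriv ?_
  simp only [id]
  field_simp
  ring

lemma tendsto_cayley_cobounded : Tendsto cayley (Bornology.cobounded ℂ) (𝓝 1) := by
  have h_inv : Tendsto (fun z ↦ 1 - 2 * I * (z + I)⁻¹) (Bornology.cobounded ℂ)
      (𝓝 (1 - 2 * I * 0)) :=
    ((tendsto_inv₀_cobounded.comp (tendsto_add_const_cobounded I)).const_mul _).const_sub _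
  rw [mul_zero, sub_zero] at h_inv
  refine h_inv.congr' ?_
  filter_upwards [Bornology.eventually_ne_cobounded (-I)] with z hz
  exact (cayley_eq_one_sub fun h ↦ hz (eq_neg_of_add_eq_zero_left h)).symm

lemma ofReal_add_I_ne_zero (x : ℝ) : (x : ℂ) + I ≠ 0 := fun h ↦ by
  simpa using congrArg Complex.im h

lemma conj_cayley_ofReal (x : ℝ) : conj (cayley x) = (cayley x)⁻¹ := by
  simp [cayley, ← sub_eq_add_neg]

lemma norm_cayley_ofReal (x : ℝ) : ‖cayley x‖ = 1 := by
  have h_conj : conj ((x : ℂ) + I) = x - I := by simp [sub_eq_add_neg]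
  rw [cayley, norm_div, ← h_conj, Complex.norm_conj,
    div_self (norm_ne_zero_iff.2 (ofReal_add_I_ne_zero x))]

lemma cayley_ofReal_ne_zero (x : ℝ) : cayley x ≠ 0 :=
  norm_ne_zero_iff.1 (norm_cayley_ofReal x ▸ one_ne_zero)

lemma ofReal_cauchyPDFReal_zero_one (x : ℝ) :
    (cauchyPDFReal 0 1 x : ℂ) = (π : ℂ)⁻¹ * ((x + I) * (x - I))⁻¹ := by
  have h_mul : ((x : ℂ) + I) * (x - I) = x ^ 2 + 1 := by linear_combination -Complex.I_sq
  simp [cauchyPDFReal_def, h_mul]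

lemma hasDerivAt_cayley_ofReal (x : ℝ) :
    HasDerivAt (fun y : ℝ ↦ cayley y) (2 * π * I * cauchyPDFReal 0 1 x * cayley x) x := by
  refine (hasDerivAt_cayley (ofReal_add_I_ne_zero x)).comp_ofReal.congr_deriv ?_
  have h_add := ofReal_add_I_ne_zero x
  have h_sub : (x : ℂ) - I ≠ 0 := (div_ne_zero_iff.1 (cayley_ofReal_ne_zero x)).1
  rw [ofReal_cauchyPDFReal_zero_one, cayley]
  field_simp

@[fun_prop]
lemma continuous_cayley_ofReal : Continuous fun x : ℝ ↦ cayley x :=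
  continuous_iff_continuousAt.2 fun x ↦ (hasDerivAt_cayley_ofReal x).continuousAt

lemma integral_cayley_zpow_cauchyMeasure {n : ℤ} (hn : n ≠ 0) :
    ∫ x, cayley x ^ n ∂(cauchyMeasure 0 1) = 0 := by
  have h_deriv (x : ℝ) : HasDerivAt (fun y : ℝ ↦ (2 * π * I * n)⁻¹ * cayley y ^ n)
      (cauchyPDFReal 0 1 x • cayley x ^ n) x := by
    have h_zpow := hasDerivAt_zpow n _ (.inl (cayley_ofReal_ne_zero x))
    refine ((h_zpow.scomp x (hasDerivAt_cayley_ofReal x)).const_mul _).congr_deriv ?_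
    have hC := cayley_ofReal_ne_zero x
    have hn' : (n : ℂ) ≠ 0 := Int.cast_ne_zero.2 hn
    rw [zpow_sub_one₀ hC, smul_eq_mul, Complex.real_smul]
    field_simp
  have h_lim {l : Filter ℝ} (hl : Tendsto ((↑) : ℝ → ℂ) l (Bornology.cobounded ℂ)) :
      Tendsto (fun y : ℝ ↦ (2 * π * I * n)⁻¹ * cayley y ^ n) l (𝓝 ((2 * π * I * n)⁻¹ * 1 ^ n)) :=
    ((tendsto_cayley_cobounded.comp hl).zpow₀ n (.inl one_ne_zero)).const_mul _
  have h_cont : Continuous fun x : ℝ ↦ cayley x ^ n :=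
    continuous_cayley_ofReal.zpow₀ n fun x ↦ .inl (cayley_ofReal_ne_zero x)
  have h_int : Integrable (fun x : ℝ ↦ cauchyPDFReal 0 1 x • cayley x ^ n) volume :=
    (integrable_cauchyPDFReal 0).smul_bdd 1 h_cont.aestronglyMeasurable
      (ae_of_all _ fun x ↦ by simp [norm_cayley_ofReal])
  have h_ftc := integral_of_hasDerivAt_of_tendsto h_deriv h_int
    (h_lim (RCLike.tendsto_ofReal_atBot_cobounded ℂ))
    (h_lim (RCLike.tendsto_ofReal_atTop_cobounded ℂ))
  rw [sub_self] at h_ftc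
  rw [← h_ftc, cauchyMeasure_of_scale_ne_zero 0 one_ne_zero,
    integral_withDensity_eq_integral_toReal_smul (measurable_cauchyPDF 0 1)
      (ae_of_all _ fun x ↦ ENNReal.ofReal_lt_top)]
  congr with x
  rw [cauchyPDF, ENNReal.toReal_ofReal (cauchyPDF_pos 0 one_ne_zero x).le]

/-- The Cayley transform of the real line, with values in the additive circle. -/
def cayleyAngle (x : ℝ) : AddCircle (2 * π) := (Complex.arg (cayley x) : ℝ)

lemma measurable_cayleyAngle : Measurable cayleyAngle :=
  AddCircle.measurable_mk'.comp (Complex.measurable_arg.comp continuous_cayley_ofReal.measurable)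

lemma fourier_cayleyAngle (n : ℤ) (x : ℝ) : fourier n (cayleyAngle x) = cayley x ^ n := by
  have h_polar : Complex.exp (Complex.arg (cayley x) * I) = cayley x := by
    simpa [norm_cayley_ofReal] using Complex.norm_mul_exp_arg_mul_I (cayley x)
  rw [cayleyAngle, fourier_coe_apply]
  conv_rhs => rw [← h_polar, ← Complex.exp_int_mul]
  congr 1
  push_cast
  field_simp

lemma measurePreserving_cayleyAngle :
    MeasurePreserving cayleyAngle (cauchyMeasure 0 1) haarAddCircle := by
  refine ⟨measurable_cayleyAngle, ?_⟩
  have := Measure.isProbabilityMeasure_map (μ := cauchyMeasure 0 1)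
    measurable_cayleyAngle.aemeasurable
  refine eq_haarAddCircle_of_integral_fourier fun n hn ↦ ?_
  rw [integral_map measurable_cayleyAngle.aemeasurable (fourier n).continuous.aestronglyMeasurable]
  simp_rw [fourier_cayleyAngle, integral_cayley_zpow_cauchyMeasure hn]

/-- The inverse `w ↦ I * (1 + w) / (1 - w)` of the Cayley transform, on the circle. At the point
`w = 1`, which is not the image of any real number, it takes the junk value `0`. -/
def cayleyAngleInv (t : AddCircle (2 * π)) : ℝ :=
  (I * (1 + fourier 1 t) / (1 - fourier 1 t)).re

lemma measurable_cayleyAngleInv : Measurable cayleyAngleInv := by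
  have h_fourier : Measurable fun t : AddCircle (2 * π) ↦ (fourier 1 t : ℂ) :=
    (fourier 1).continuous.measurable
  unfold cayleyAngleInv
  fun_prop

lemma leftInverse_cayleyAngleInv : Function.LeftInverse cayleyAngleInv cayleyAngle := by
  intro x
  have h_add := ofReal_add_I_ne_zero x
  have h_inv : I * (1 + cayley x) / (1 - cayley x) = x := by
    rw [cayley_eq_one_sub h_add]
    field_simp
    ring
  rw [cayleyAngleInv, fourier_cayleyAngle, zpow_one, h_inv, Complex.ofReal_re]

end CayleyTransform

section CayleyOperator

open ProbabilityTheory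

/-- The weight `π^{-1/2} (x + i)⁻¹` of the Cayley operator, the square of whose modulus is the
Cauchy density. -/
def cayleyWeight (x : ℝ) : ℂ := (√π : ℂ)⁻¹ * ((x : ℂ) + I)⁻¹

lemma cayleyWeight_ne_zero (x : ℝ) : cayleyWeight x ≠ 0 :=
  mul_ne_zero (inv_ne_zero (Complex.ofReal_ne_zero.2 (Real.sqrt_ne_zero'.2 Real.pi_pos)))
    (inv_ne_zero (ofReal_add_I_ne_zero x))

lemma conj_cayleyWeight (x : ℝ) : conj (cayleyWeight x) = cayleyWeight x * (cayley x)⁻¹ := by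
  have h_add := ofReal_add_I_ne_zero x
  simp only [cayleyWeight, cayley, map_mul, map_inv₀, map_add, Complex.conj_ofReal, Complex.conj_I,
    inv_div, ← sub_eq_add_neg]
  field_simp

lemma sq_enorm_cayleyWeight (x : ℝ) : ‖cayleyWeight x‖ₑ ^ 2 = cauchyPDF 0 1 x := by
  have h_sq : ‖cayleyWeight x‖ ^ 2 = cauchyPDFReal 0 1 x := by
    apply Complex.ofReal_injective
    rw [ofReal_cauchyPDFReal_zero_one, Complex.ofReal_pow, ← Complex.mul_conj']
    have h_sqrt : (√π : ℂ) ^ 2 = π := by exact_mod_cast Real.sq_sqrt Real.pi_pos.le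
    simp only [cayleyWeight, map_mul, map_inv₀, map_add, Complex.conj_ofReal, Complex.conj_I,
      ← sub_eq_add_neg, ← h_sqrt, mul_inv]
    ring
  rw [cauchyPDF, ← h_sq, ENNReal.ofReal_pow (norm_nonneg _), ofReal_norm]

lemma isWeightedSubstitution_cayley :
    IsWeightedSubstitution 2 cayleyWeight cayleyAngle volume haarAddCircle where
  ne_top := ENNReal.ofNat_ne_top
  measurable_weight := by unfold cayleyWeight; fun_prop
  weight_ne_zero := cayleyWeight_ne_zero
  measurePreserving := by
    simp_rw [ENNReal.toReal_ofNat, ENNReal.rpow_ofNat, sq_enorm_cayleyWeight]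
    exact cauchyMeasure_of_scale_ne_zero 0 one_ne_zero ▸ measurePreserving_cayleyAngle

/-- The Cayley operator `U_C` as a unitary map `L²(𝕋) → L²(ℝ)`. -/
def cayleyUnitary : L2T ≃ₗᵢ[ℂ] Lp ℂ 2 (volume : Measure ℝ) :=
  .ofSurjective (isWeightedSubstitution_cayley.linearIsometry ℂ)
    (isWeightedSubstitution_cayley.surjective_linearIsometry measurable_cayleyAngleInv
      leftInverse_cayleyAngleInv)

lemma coeFn_cayleyUnitary (f : L2T) :
    cayleyUnitary f =ᵐ[volume] fun x ↦ cayleyWeight x * f (cayleyAngle x) :=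
  isWeightedSubstitution_cayley.coeFn_linearIsometry f

lemma coeFn_cayleyUnitary_fourierBasis (n : ℤ) :
    cayleyUnitary (fourierBasis n) =ᵐ[volume] fun x ↦ cayleyWeight x * cayley x ^ n := by
  rw [coe_fourierBasis]
  filter_upwards [coeFn_cayleyUnitary (fourierLp 2 n),
    isWeightedSubstitution_cayley.quasiMeasurePreserving.ae (coeFn_fourierLp 2 n)] with x hx hnx
  rw [hx, hnx, fourier_cayleyAngle]

end CayleyOperator

section HardySupport

open Polynomial

lemma hasFourierSupportIn_inv_add_I_pow (k : ℕ) :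
    HasFourierSupportIn (Set.Ioi 0) fun x : ℝ ↦ ((x : ℂ) + I)⁻¹ ^ (k + 1) := by
  have h_re : 0 < (2 * π : ℂ).re := by simp [Real.pi_pos]
  have h_kernel : HasFourierSupportIn (Set.Ioi 0) (𝓕⁻ (gammaKernel k (2 * π))) :=
    ⟨_, integrable_gammaKernel k h_re, memLp_two_gammaKernel k h_re,
      fun _ ↦ Set.indicator_of_notMem (f := _), rfl⟩
  convert h_kernel.const_smul ((k.factorial : ℂ)⁻¹ * (-2 * π * I) ^ (k + 1)) using 1
  funext x
  have h_factor : (2 * π - 2 * π * I * x : ℂ) = -2 * π * I * (x + I) := by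
    linear_combination 2 * π * Complex.I_sq
  have h_fact : (k.factorial : ℂ) ≠ 0 := Nat.cast_ne_zero.2 k.factorial_ne_zero
  rw [Pi.smul_apply, fourierInv_gammaKernel k h_re, h_factor, smul_eq_mul]
  have h_const : (-2 * π * I : ℂ) ≠ 0 := by simp [Real.pi_ne_zero]
  generalize (-2 * π * I : ℂ) = c at h_const ⊢
  simp only [inv_pow, mul_pow c]
  field_simp

lemma hasFourierSupportIn_inv_add_I_mul_eval (q : ℂ[X]) :
    HasFourierSupportIn (Set.Ioi 0) fun x : ℝ ↦ ((x : ℂ) + I)⁻¹ * q.eval ((x : ℂ) + I)⁻¹ := by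
  induction q using Polynomial.induction_on' with
  | add q r hq hr =>
    simp_rw [eval_add, mul_add]
    exact hq.add hr
  | monomial k c =>
    convert (hasFourierSupportIn_inv_add_I_pow k).const_smul c using 1
    funext x
    simp only [eval_monomial, Pi.smul_apply, smul_eq_mul, pow_succ]
    ring

lemma hasFourierSupportIn_cayleyWeight_mul_pow (n : ℕ) :
    HasFourierSupportIn (Set.Ioi 0) fun x : ℝ ↦ cayleyWeight x * cayley x ^ n := by
  convert hasFourierSupportIn_inv_add_I_mul_eval (C (√π : ℂ)⁻¹ * (1 - C (2 * I) * X) ^ n) using 1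
  funext x
  simp only [cayleyWeight, cayley_eq_one_sub (ofReal_add_I_ne_zero x), eval_mul, eval_C, eval_pow,
    eval_sub, eval_one, eval_X]
  ring

lemma hasFourierSupportIn_cayleyWeight_mul_zpow_of_nonneg {p : ℤ} (hp : 0 ≤ p) :
    HasFourierSupportIn (Set.Ioi 0) fun x : ℝ ↦ cayleyWeight x * cayley x ^ p := by
  obtain ⟨n, rfl⟩ := Int.eq_ofNat_of_zero_le hp
  simp_rw [zpow_natCast]
  exact hasFourierSupportIn_cayleyWeight_mul_pow n

lemma hasFourierSupportIn_cayleyWeight_mul_zpow_of_neg {p : ℤ} (hp : p < 0) :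
    HasFourierSupportIn (Set.Iio 0) fun x : ℝ ↦ cayleyWeight x * cayley x ^ p := by
  obtain ⟨n, rfl⟩ := Int.eq_negSucc_of_lt_zero hp
  convert (hasFourierSupportIn_cayleyWeight_mul_pow n).star using 1
  · simp
  funext x
  rw [Pi.star_apply, RCLike.star_def, map_mul, map_pow, conj_cayleyWeight, conj_cayley_ofReal,
    zpow_negSucc, mul_assoc, pow_succ', mul_inv, inv_pow]

end HardySupport

/-- The Cayley operator `U_C f(x) = π^{-1/2} (x+i)⁻¹ f((x-i)/(x+i))` is a unitary map
`L²(𝕋) → L²(ℝ)` which maps the Hardy space `H²(𝕋) = {f : f̂(p) = 0 for p < 0}` onto the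
Hardy space `H²(ℝ) = {g : (F g)(ξ) = 0 for ξ < 0}`, `F` being the unitary Fourier
transform on `L²(ℝ)` (characterized by agreeing with the Fourier integral on
integrable functions). -/
theorem cayley_unitary_maps_hardy_onto_hardy
    (F : Lp ℂ 2 (volume : Measure ℝ) ≃ₗᵢ[ℂ] Lp ℂ 2 (volume : Measure ℝ))
    (hF : ∀ g : Lp ℂ 2 (volume : Measure ℝ), Integrable (g : ℝ → ℂ) volume →
      (F g : ℝ → ℂ) =ᵐ[volume] 𝓕 (g : ℝ → ℂ)) :
    ∃ U : L2T ≃ₗᵢ[ℂ] Lp ℂ 2 (volume : Measure ℝ),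
      (∀ f : L2T,
        (U f : ℝ → ℂ) =ᵐ[volume] fun x : ℝ =>
          ((Real.sqrt π : ℂ))⁻¹ * ((x : ℂ) + Complex.I)⁻¹ *
            f ((Complex.arg (((x : ℂ) - Complex.I) / ((x : ℂ) + Complex.I)) : ℝ) :
              AddCircle (2 * π))) ∧
      ∀ f : L2T,
        (∀ p : ℤ, p < 0 → fourierCoeff (f : AddCircle (2 * π) → ℂ) p = 0) ↔
          ∀ᵐ ξ ∂(volume : Measure ℝ), ξ < 0 → (F (U f) : ℝ → ℂ) ξ = 0 := by
  refine ⟨cayleyUnitary, coeFn_cayleyUnitary, fun f ↦ ?_⟩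
  let b := HilbertBasis.ofRepr ((cayleyUnitary.trans F).symm.trans fourierBasis.repr)
  have hb (p : ℤ) : b p = F (cayleyUnitary (fourierBasis p)) := rfl
  have h_coeff (p : ℤ) : fourierCoeff f p = inner ℂ (b p) (F (cayleyUnitary f)) := by
    rw [← fourierBasis_repr, HilbertBasis.repr_apply_apply, hb, F.inner_map_map,
      cayleyUnitary.inner_map_map]
  have h_support {S : Set ℝ} {p : ℤ}
      (h : HasFourierSupportIn S fun x : ℝ ↦ cayleyWeight x * cayley x ^ p) :
      ∀ᵐ ξ ∂volume, ξ ∉ S → b p ξ = 0 :=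
    IsFourierUnitary.apply_ae_eq_zero_of_hasFourierSupportIn hF h
      (coeFn_cayleyUnitary_fourierBasis p)
  simp_rw [h_coeff]
  refine (ae_eq_zero_on_iff_forall_inner_eq_zero b (P := {p | p < 0}) measurableSet_Iio
    (fun p hp ↦ ?_)
    (fun p hp ↦ h_support (hasFourierSupportIn_cayleyWeight_mul_zpow_of_neg hp)) _).symm
  filter_upwards [h_support (hasFourierSupportIn_cayleyWeight_mul_zpow_of_nonneg (not_lt.1 hp))]
    with ξ hξ (hξ_neg : ξ < 0)
  exact hξ hξ_neg.not_gt
end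
end

section
/- For a ∈ (0,1) and odd integer p, ∫₀^∞ cos(ax)J_p(x)/x dx = (1/p)cos(p arcsin(a)). -/
/-!
Let `f u = cos (p * arcsin u)`. For odd `p` it is even, continuous and vanishes for `1 ≤ |u|`
(`Real.arcsin` is constant beyond `±1`). The substitution `u = sin t` and an integration by parts
turn its cosine transform into `x ↦ p * (π / 2) * J_p(x) / x`, so the integral of the theorem is the
inverse cosine transform that recovers `f a`. The inversion formula requires `J_p(x) / x` to be
integrable at infinity, which is guaranteed by the stationary phase bound `J_p(x) = O(x ^ (-1/2))`.
-/

open Real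

noncomputable section

/-- The Bessel function of the first kind of integer order `p`,
`J_p(x) = (1/π) ∫₀^π cos(pt - x sin t) dt`. -/
def besselJ (p : ℤ) (x : ℝ) : ℝ :=
  (1 / π) * ∫ t in (0 : ℝ)..π, Real.cos (p * t - x * Real.sin t)

open Set Filter MeasureTheory Asymptotics FourierTransform

section CosineTransform

/-- The unnormalised Fourier cosine transform `x ↦ ∫₀^∞ cos(xu) f(u) du`; with this convention the
transform applied twice to an even function `f` gives back `(π / 2) f`. -/
def cosineTransform (f : ℝ → ℝ) (x : ℝ) : ℝ :=
  ∫ u in Ioi 0, cos (x * u) * f u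

variable {f : ℝ → ℝ}

lemma even_cosineTransform (f : ℝ → ℝ) : (cosineTransform f).Even := fun x ↦ by
  simp [cosineTransform]

lemma cosineTransform_const_mul (c : ℝ) (f : ℝ → ℝ) (x : ℝ) :
    cosineTransform (fun u ↦ c * f u) x = c * cosineTransform f x := by
  simp only [cosineTransform, mul_left_comm _ c, integral_const_mul]

lemma cosineTransform_comp_mul_left {b : ℝ} (hb : 0 < b) (f : ℝ → ℝ) (x : ℝ) :
    cosineTransform (fun u ↦ f (b * u)) (b * x) = b⁻¹ * cosineTransform f x := by
  have h := integral_comp_mul_left_Ioi (fun u ↦ cos (x * u) * f u) 0 hb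
  simpa only [cosineTransform, mul_zero, smul_eq_mul, mul_left_comm x b, mul_assoc b x] using h

lemma continuous_cosineTransform (hf : IntegrableOn f (Ioi 0)) :
    Continuous (cosineTransform f) := by
  refine continuous_of_dominated (bound := fun u ↦ ‖f u‖) (fun x ↦ ?_) (fun x ↦ ?_) hf.norm ?_
  · exact (by fun_prop : Continuous fun u ↦ cos (x * u)).aestronglyMeasurable.mul
      hf.aestronglyMeasurable
  · refine .of_forall fun u ↦ ?_
    rw [norm_mul]
    exact mul_le_of_le_one_left (norm_nonneg _) (abs_cos_le_one _)
  · exact .of_forall fun u ↦ by fun_prop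

lemma integral_exp_mul_I_mul_of_even (hfe : f.Even) (hf : Integrable f) (c : ℝ) :
    ∫ u : ℝ, Complex.exp ((c * u : ℝ) * Complex.I) * f u = (2 * cosineTransform f c : ℝ) := by
  set F : ℝ → ℂ := fun u ↦ Complex.exp ((c * u : ℝ) * Complex.I) * f u with hF
  have hFi : Integrable F :=
    hf.ofReal.bdd_mul (c := 1) (by fun_prop)
      (.of_forall fun u ↦ (Complex.norm_exp_ofReal_mul_I _).le)
  have hsum (u : ℝ) : F (-u) + F u = (2 * (cos (c * u) * f u) : ℝ) := by
    simp only [hF, hfe u, mul_neg, Complex.ofReal_neg, Complex.exp_mul_I, Complex.cos_neg,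
      Complex.sin_neg]
    push_cast
    ring
  calc ∫ u, F u = (∫ u in Iic 0, F u) + ∫ u in Ioi 0, F u :=
        (intervalIntegral.integral_Iic_add_Ioi hFi.integrableOn hFi.integrableOn).symm
    _ = (∫ u in Ioi 0, F (-u)) + ∫ u in Ioi 0, F u := by
        rw [integral_comp_neg_Ioi, neg_zero]
    _ = ∫ u in Ioi 0, F (-u) + F u :=
        (integral_add hFi.comp_neg.integrableOn hFi.integrableOn).symm
    _ = (2 * cosineTransform f c : ℝ) := by
        simp only [hsum]
        rw [integral_complex_ofReal, integral_const_mul, cosineTransform]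

lemma fourierInv_ofReal_of_even (hfe : f.Even) (hf : Integrable f) (w : ℝ) :
    𝓕⁻ (fun u ↦ (f u : ℂ)) w = (2 * cosineTransform f (2 * π * w) : ℝ) := by
  rw [← integral_exp_mul_I_mul_of_even hfe hf, Real.fourierInv_eq']
  simp [mul_assoc, mul_comm, mul_left_comm]

lemma fourier_ofReal_of_even (hfe : f.Even) (hf : Integrable f) (w : ℝ) :
    𝓕 (fun u ↦ (f u : ℂ)) w = (2 * cosineTransform f (2 * π * w) : ℝ) := by
  rw [← fourierInv_ofReal_of_even hfe hf, Real.fourierInv_eq_fourier_comp_neg]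
  simp only [hfe _]

theorem cosineTransform_cosineTransform (hfe : f.Even) (hfc : Continuous f) (hf : Integrable f)
    (hcf : Integrable (cosineTransform f)) (a : ℝ) :
    cosineTransform (cosineTransform f) a = π / 2 * f a := by
  set g : ℝ → ℝ := fun w ↦ 2 * cosineTransform f (2 * π * w)
  have hfourier : 𝓕 (fun u ↦ (f u : ℂ)) = fun w ↦ (g w : ℂ) :=
    funext (fourier_ofReal_of_even hfe hf)
  have hge : g.Even := fun w ↦ by simp only [g, mul_neg, even_cosineTransform f _]
  have hg : Integrable g := (hcf.comp_mul_left' (by positivity)).const_mul 2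
  have hinv : f a = 2 * cosineTransform g (2 * π * a) := by
    have h := congrFun ((Complex.continuous_ofReal.comp hfc).fourierInv_fourier_eq hf.ofReal
      (hfourier ▸ hg.ofReal)) a
    rw [Function.comp_def, hfourier, fourierInv_ofReal_of_even hge hg] at h
    exact Complex.ofReal_injective h.symm
  rw [hinv, cosineTransform_const_mul, cosineTransform_comp_mul_left two_pi_pos]
  field_simp

end CosineTransform

section Decay

lemma abs_integral_mul_deriv_mul_sin_le {w w' φ φ' : ℝ → ℝ} {a b : ℝ} (hab : a ≤ b)
    (hw : ∀ t ∈ Icc a b, HasDerivAt w (w' t) t) (hw' : ContinuousOn w' (Icc a b))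
    (hφ : ∀ t ∈ Icc a b, HasDerivAt φ (φ' t) t) (hφ' : ContinuousOn φ' (Icc a b)) :
    |∫ t in a..b, w t * (φ' t * sin (φ t))| ≤ |w a| + |w b| + ∫ t in a..b, |w' t| := by
  rw [← uIcc_of_le hab] at hw hw' hφ hφ'
  have hφc : ContinuousOn φ (uIcc a b) := fun t ht ↦ (hφ t ht).continuousAt.continuousWithinAt
  have hcos (t) (ht : t ∈ uIcc a b) : HasDerivAt (fun s ↦ -cos (φ s)) (φ' t * sin (φ t)) t := by
    convert! (hφ t ht).cos.neg using 1
    ring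
  have hparts := intervalIntegral.integral_mul_deriv_eq_deriv_mul hw hcos hw'.intervalIntegrable
    (hφ'.mul (continuous_sin.comp_continuousOn hφc)).intervalIntegrable
  have hboundary (t) : |w t * -cos (φ t)| ≤ |w t| := by
    rw [abs_mul, abs_neg]
    exact mul_le_of_le_one_right (abs_nonneg _) (abs_cos_le_one _)
  have hrest : |∫ t in a..b, w' t * -cos (φ t)| ≤ ∫ t in a..b, |w' t| := by
    refine intervalIntegral.norm_integral_le_of_norm_le (f := fun t ↦ w' t * -cos (φ t)) hab
      (.of_forall fun t _ ↦ ?_) hw'.abs.intervalIntegrable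
    rw [norm_mul, norm_neg]
    exact mul_le_of_le_one_right (abs_nonneg _) (abs_cos_le_one _)
  rw [hparts]
  linarith [abs_sub (w b * -cos (φ b) - w a * -cos (φ a)) (∫ t in a..b, w' t * -cos (φ t)),
    abs_sub (w b * -cos (φ b)) (w a * -cos (φ a)), hboundary a, hboundary b]

variable {g : ℝ → ℝ} {A B β x : ℝ}

lemma cos_pos_of_mem_Icc_zero (hβ : β < π / 2) {t : ℝ} (ht : t ∈ Icc 0 β) : 0 < cos t :=
  cos_pos_of_mem_Ioo ⟨by linarith [ht.1, pi_pos], by linarith [ht.2]⟩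

lemma integral_sin_div_cos_sq (hβ0 : 0 ≤ β) (hβ : β < π / 2) :
    ∫ t in 0..β, sin t / cos t ^ 2 = (cos β)⁻¹ - 1 := by
  have hcos (t) (ht : t ∈ uIcc 0 β) : cos t ≠ 0 :=
    (cos_pos_of_mem_Icc_zero hβ (uIcc_of_le hβ0 ▸ ht)).ne'
  rw [intervalIntegral.integral_eq_sub_of_hasDerivAt (f := fun t ↦ (cos t)⁻¹)]
  · simp
  · intro t ht
    simpa using (hasDerivAt_cos t).fun_inv (hcos t ht)
  · exact (continuousOn_sin.div (by fun_prop)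
      fun t ht ↦ pow_ne_zero 2 (hcos t ht)).intervalIntegrable

lemma integral_abs_deriv_div_cos_le (hg : ContDiff ℝ 1 g) (hA : ∀ t ∈ Icc 0 β, |g t| ≤ A)
    (hB : ∀ t ∈ Icc 0 β, |deriv g t| ≤ B) (hβ0 : 0 ≤ β) (hβ : β < π / 2) :
    ∫ t in 0..β, |deriv g t / cos t + g t * (sin t / cos t ^ 2)| ≤
      β * (B / cos β) + A * ((cos β)⁻¹ - 1) := by
  have hcos (t) (ht : t ∈ Icc 0 β) : 0 < cos t := cos_pos_of_mem_Icc_zero hβ ht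
  have hcos' (t) (ht : t ∈ uIcc 0 β) : cos t ≠ 0 := (hcos t (uIcc_of_le hβ0 ▸ ht)).ne'
  have hquot : ContinuousOn (fun t ↦ sin t / cos t ^ 2) (uIcc 0 β) :=
    continuousOn_sin.div (by fun_prop) fun t ht ↦ pow_ne_zero 2 (hcos' t ht)
  have hAquot : IntervalIntegrable (fun t ↦ A * (sin t / cos t ^ 2)) volume 0 β :=
    hquot.intervalIntegrable.const_mul A
  have hle (t) (ht : t ∈ Icc 0 β) : |deriv g t / cos t + g t * (sin t / cos t ^ 2)| ≤
      B / cos β + A * (sin t / cos t ^ 2) := by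
    have hsin : 0 ≤ sin t := sin_nonneg_of_nonneg_of_le_pi ht.1 (by linarith [ht.2, pi_pos])
    have hmono : cos β ≤ cos t :=
      cos_le_cos_of_nonneg_of_le_pi ht.1 (by linarith [pi_pos]) ht.2
    have hB0 : 0 ≤ B := (abs_nonneg _).trans (hB t ht)
    refine (abs_add_le _ _).trans (add_le_add ?_ ?_)
    · rw [abs_div, abs_of_pos (hcos t ht)]
      exact div_le_div₀ hB0 (hB t ht) (hcos β ⟨hβ0, le_rfl⟩) hmono
    · rw [abs_mul, abs_of_nonneg (by positivity : 0 ≤ sin t / cos t ^ 2)]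
      gcongr
      exact hA t ht
  calc ∫ t in 0..β, |deriv g t / cos t + g t * (sin t / cos t ^ 2)|
      ≤ ∫ t in 0..β, (B / cos β + A * (sin t / cos t ^ 2)) :=
        intervalIntegral.integral_mono_on hβ0
          ((hg.continuous_deriv_one.continuousOn.div continuousOn_cos hcos').add
            (hg.continuous.continuousOn.mul hquot)).abs.intervalIntegrable
          (intervalIntegrable_const.add hAquot) hle
    _ = β * (B / cos β) + A * ((cos β)⁻¹ - 1) := by
        rw [intervalIntegral.integral_add intervalIntegrable_const hAquot,
          intervalIntegral.integral_const_mul, intervalIntegral.integral_const,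
          integral_sin_div_cos_sq hβ0 hβ, sub_zero, smul_eq_mul]

lemma abs_integral_mul_sin_mul_sin_le_div_cos (hg : ContDiff ℝ 1 g)
    (hA : ∀ t ∈ Icc 0 β, |g t| ≤ A) (hB : ∀ t ∈ Icc 0 β, |deriv g t| ≤ B)
    (hβ0 : 0 ≤ β) (hβ : β < π / 2) (hx : 0 < x) :
    |∫ t in 0..β, g t * sin (x * sin t)| ≤ (2 * A + β * B) / (x * cos β) := by
  have hcos (t) (ht : t ∈ Icc 0 β) : 0 < cos t := cos_pos_of_mem_Icc_zero hβ ht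
  have hcosβ : 0 < cos β := hcos β ⟨hβ0, le_rfl⟩
  have hdiv (t) (ht : t ∈ Icc 0 β) : HasDerivAt (fun s ↦ g s / cos s)
      (deriv g t / cos t + g t * (sin t / cos t ^ 2)) t := by
    convert! (hg.differentiable_one t).hasDerivAt.div (hasDerivAt_cos t) (hcos t ht).ne' using 1
    have := (hcos t ht).ne'
    field_simp
    ring
  have hdiv' : ContinuousOn (fun t ↦ deriv g t / cos t + g t * (sin t / cos t ^ 2)) (Icc 0 β) :=
    (hg.continuous_deriv_one.continuousOn.div continuousOn_cos fun t ht ↦ (hcos t ht).ne').add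
      (hg.continuous.continuousOn.mul (continuousOn_sin.div (by fun_prop)
        fun t ht ↦ pow_ne_zero 2 (hcos t ht).ne'))
  have hphase : ∫ t in 0..β, g t / cos t * (x * cos t * sin (x * sin t)) =
      x * ∫ t in 0..β, g t * sin (x * sin t) := by
    rw [← intervalIntegral.integral_const_mul]
    refine intervalIntegral.integral_congr fun t ht ↦ ?_
    have := (hcos t (uIcc_of_le hβ0 ▸ ht)).ne'
    field_simp
  have hparts := abs_integral_mul_deriv_mul_sin_le hβ0 hdiv hdiv'
    (fun t _ ↦ (hasDerivAt_sin t).const_mul x) (by fun_prop)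
  rw [hphase, abs_mul, abs_of_pos hx, cos_zero, div_one, abs_div, abs_of_pos hcosβ] at hparts
  have hboundary : |g β| / cos β ≤ A / cos β := by
    gcongr
    exact hA β ⟨hβ0, le_rfl⟩
  rw [mul_comm x, ← div_div, le_div_iff₀' hx]
  calc _ ≤ A + A / cos β + (β * (B / cos β) + A * ((cos β)⁻¹ - 1)) := by
        linarith [hA 0 ⟨le_rfl, hβ0⟩, integral_abs_deriv_div_cos_le hg hA hB hβ0 hβ]
    _ = (2 * A + β * B) / cos β := by ring

lemma abs_integral_mul_sin_mul_sin_le (hg : ContDiff ℝ 1 g)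
    (hA : ∀ t ∈ Icc 0 (π / 2), |g t| ≤ A) (hB : ∀ t ∈ Icc 0 (π / 2), |deriv g t| ≤ B)
    (hx : 0 < x) {d : ℝ} (hd0 : 0 < d) (hd : d ≤ π / 2) :
    |∫ t in 0..π / 2, g t * sin (x * sin t)| ≤
      d * A + (2 * A + π / 2 * B) * (π / 2) / (x * d) := by
  have hsub : Icc 0 (π / 2 - d) ⊆ Icc 0 (π / 2) := Icc_subset_Icc_right (by linarith)
  have hA0 : 0 ≤ A := (abs_nonneg _).trans (hA 0 ⟨le_rfl, by positivity⟩)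
  have hB0 : 0 ≤ B := (abs_nonneg _).trans (hB 0 ⟨le_rfl, by positivity⟩)
  have hint (a b : ℝ) : IntervalIntegrable (fun t ↦ g t * sin (x * sin t)) volume a b := by
    have := hg.continuous
    exact Continuous.intervalIntegrable (by fun_prop) a b
  have hnear : |∫ t in (π / 2 - d)..π / 2, g t * sin (x * sin t)| ≤ d * A := by
    have h := intervalIntegral.norm_integral_le_of_norm_le_const (a := π / 2 - d) (b := π / 2)
      (f := fun t ↦ g t * sin (x * sin t)) (C := A) fun t ht ↦ by
        rw [uIoc_of_le (by linarith)] at ht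
        rw [norm_mul]
        exact (mul_le_of_le_one_right (abs_nonneg _) (abs_sin_le_one _)).trans
          (hA t ⟨by linarith [ht.1], ht.2⟩)
    rwa [sub_sub_cancel, abs_of_pos hd0, mul_comm] at h
  have hfar : |∫ t in 0..(π / 2 - d), g t * sin (x * sin t)| ≤
      (2 * A + π / 2 * B) * (π / 2) / (x * d) := by
    have hsin : 2 / π * d ≤ sin d := mul_le_sin hd0.le hd
    calc |∫ t in 0..(π / 2 - d), g t * sin (x * sin t)|
        ≤ (2 * A + (π / 2 - d) * B) / (x * cos (π / 2 - d)) :=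
          abs_integral_mul_sin_mul_sin_le_div_cos hg (fun t ht ↦ hA t (hsub ht))
            (fun t ht ↦ hB t (hsub ht)) (by linarith) (by linarith) hx
      _ ≤ (2 * A + π / 2 * B) / (x * (2 / π * d)) := by
          rw [cos_pi_div_two_sub]
          gcongr
          linarith
      _ = (2 * A + π / 2 * B) * (π / 2) / (x * d) := by field_simp
  rw [← intervalIntegral.integral_add_adjacent_intervals (hint 0 (π / 2 - d)) (hint _ _)]
  linarith [abs_add_le (∫ t in 0..(π / 2 - d), g t * sin (x * sin t))
    (∫ t in (π / 2 - d)..π / 2, g t * sin (x * sin t))]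

theorem isBigO_integral_mul_sin_mul_sin (hg : ContDiff ℝ 1 g) :
    (fun x ↦ ∫ t in 0..π / 2, g t * sin (x * sin t)) =O[atTop] fun x ↦ x ^ (-(1 / 2) : ℝ) := by
  obtain ⟨A, hA⟩ := isCompact_Icc.exists_bound_of_continuousOn hg.continuous.continuousOn
  obtain ⟨B, hB⟩ := isCompact_Icc.exists_bound_of_continuousOn hg.continuous_deriv_one.continuousOn
  refine .of_bound (A + (2 * A + π / 2 * B) * (π / 2)) ?_
  filter_upwards [eventually_ge_atTop 1] with x hx
  have hx0 : 0 < x := by linarith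
  set d : ℝ := x ^ (-(1 / 2) : ℝ) with hd
  have hd0 : 0 < d := by positivity
  have hd1 : d ≤ 1 := rpow_le_one_of_one_le_of_nonpos hx (by norm_num)
  -- This `d` balances the errors `O(d)` near `π / 2` and `O(1 / (x * d))` away from it.
  have hxd : x * d = d⁻¹ := by
    rw [hd, ← rpow_neg hx0.le, ← rpow_one_add' hx0.le (by norm_num)]
    norm_num
  calc ‖∫ t in 0..π / 2, g t * sin (x * sin t)‖
      ≤ d * A + (2 * A + π / 2 * B) * (π / 2) / (x * d) :=
        abs_integral_mul_sin_mul_sin_le hg hA hB hx0 hd0 (by linarith [pi_gt_three])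
    _ = (A + (2 * A + π / 2 * B) * (π / 2)) * ‖d‖ := by
        rw [hxd, div_inv_eq_mul, norm_of_nonneg hd0.le]
        ring

end Decay

section OddOrder

lemma continuous_cos_mul_arcsin (ν : ℝ) : Continuous fun u ↦ cos (ν * arcsin u) := by
  have := continuous_arcsin
  fun_prop

variable {p : ℤ} (hp : Odd p)
include hp

lemma cos_odd_mul_pi_div_two : cos (p * (π / 2)) = 0 := by
  obtain ⟨k, rfl⟩ := hp
  exact cos_eq_zero_iff.2 ⟨k, by push_cast; ring⟩

lemma besselJ_eq_integral_sin_mul_sin_of_odd (x : ℝ) :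
    besselJ p x = 2 / π * ∫ t in 0..π / 2, sin (p * t) * sin (x * sin t) := by
  have hint (a b : ℝ) : IntervalIntegrable (fun t ↦ cos (p * t - x * sin t)) volume a b :=
    Continuous.intervalIntegrable (by fun_prop) a b
  have hreflect : ∫ t in π / 2..π, cos (p * t - x * sin t) =
      ∫ t in 0..π / 2, -cos (p * t + x * sin t) := by
    have h := intervalIntegral.integral_comp_sub_left (a := 0) (b := π / 2)
      (fun t ↦ cos (p * t - x * sin t)) π
    rw [sub_zero, sub_half] at h
    rw [← h]
    congr 1 with t
    rw [sin_pi_sub, mul_sub, sub_sub, cos_int_mul_pi_sub, hp.neg_one_zpow, neg_one_mul]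
  rw [besselJ, ← intervalIntegral.integral_add_adjacent_intervals (hint 0 (π / 2)) (hint _ π),
    hreflect, ← intervalIntegral.integral_add (hint _ _)
      (Continuous.intervalIntegrable (by fun_prop) _ _)]
  have hsum (t : ℝ) : cos (p * t - x * sin t) + -cos (p * t + x * sin t) =
      2 * (sin (p * t) * sin (x * sin t)) := by
    rw [cos_sub, cos_add]
    ring
  simp only [hsum, intervalIntegral.integral_const_mul]
  ring

lemma besselJ_isBigO_atTop_of_odd : besselJ p =O[atTop] fun x ↦ x ^ (-(1 / 2) : ℝ) := by
  simp only [funext (besselJ_eq_integral_sin_mul_sin_of_odd hp)]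
  exact (isBigO_integral_mul_sin_mul_sin (by fun_prop)).const_mul_left _

lemma cos_odd_mul_arcsin_of_one_le_abs {u : ℝ} (hu : 1 ≤ |u|) : cos (p * arcsin u) = 0 := by
  rcases le_abs'.1 hu with h | h
  · rw [arcsin_of_le_neg_one h, mul_neg, cos_neg, cos_odd_mul_pi_div_two hp]
  · rw [arcsin_of_one_le h, cos_odd_mul_pi_div_two hp]

lemma integrable_cos_odd_mul_arcsin : Integrable fun u ↦ cos (p * arcsin u) :=
  (continuous_cos_mul_arcsin p).integrable_of_hasCompactSupport <|
    .intro (isCompact_Icc (a := -1) (b := 1)) fun _ hu ↦ cos_odd_mul_arcsin_of_one_le_abs hp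
      (not_le.1 fun h ↦ hu (abs_le.1 h)).le

lemma cosineTransform_cos_odd_mul_arcsin (x : ℝ) :
    cosineTransform (fun u ↦ cos (p * arcsin u)) x =
      ∫ t in 0..π / 2, cos (x * sin t) * cos (p * t) * cos t := by
  have hsubst := intervalIntegral.integral_comp_mul_deriv (a := 0) (b := π / 2)
    (g := fun u ↦ cos (x * u) * cos (p * arcsin u)) (fun t _ ↦ hasDerivAt_sin t)
    continuousOn_cos
    ((by fun_prop : Continuous fun u ↦ cos (x * u)).mul (continuous_cos_mul_arcsin p))
  rw [sin_zero, sin_pi_div_two] at hsubst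
  calc cosineTransform (fun u ↦ cos (p * arcsin u)) x
      = ∫ u in 0..1, cos (x * u) * cos (p * arcsin u) := by
        rw [intervalIntegral.integral_of_le zero_le_one, cosineTransform]
        refine setIntegral_eq_of_subset_of_forall_sdiff_eq_zero measurableSet_Ioi
          Ioc_subset_Ioi_self fun u hu ↦ ?_
        have hu1 : 1 ≤ |u| := (not_le.1 fun h ↦ hu.2 ⟨hu.1, h⟩).le.trans (le_abs_self u)
        rw [cos_odd_mul_arcsin_of_one_le_abs hp hu1, mul_zero]
    _ = ∫ t in 0..π / 2, cos (x * sin t) * cos (p * t) * cos t := by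
        rw [← hsubst]
        refine intervalIntegral.integral_congr fun t ht ↦ ?_
        rw [uIcc_of_le (by positivity)] at ht
        simp only [Function.comp_apply, arcsin_sin (by linarith [ht.1, pi_pos]) ht.2]

lemma mul_cosineTransform_cos_odd_mul_arcsin (x : ℝ) :
    x * cosineTransform (fun u ↦ cos (p * arcsin u)) x = p * (π / 2) * besselJ p x := by
  have hcos (t : ℝ) : HasDerivAt (fun s ↦ cos (p * s)) (-(p * sin (p * t))) t := by
    simpa [mul_comm] using ((hasDerivAt_id t).const_mul (p : ℝ)).cos
  have hsin (t : ℝ) : HasDerivAt (fun s ↦ sin (x * sin s)) (cos (x * sin t) * (x * cos t)) t :=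
    ((hasDerivAt_sin t).const_mul x).sin
  calc x * cosineTransform (fun u ↦ cos (p * arcsin u)) x
      = ∫ t in 0..π / 2, cos (p * t) * (cos (x * sin t) * (x * cos t)) := by
        rw [cosineTransform_cos_odd_mul_arcsin hp, ← intervalIntegral.integral_const_mul]
        congr 1 with t
        ring
    _ = p * ∫ t in 0..π / 2, sin (p * t) * sin (x * sin t) := by
        rw [intervalIntegral.integral_mul_deriv_eq_deriv_mul (fun t _ ↦ hcos t) (fun t _ ↦ hsin t)
          (Continuous.intervalIntegrable (by fun_prop) _ _)
          (Continuous.intervalIntegrable (by fun_prop) _ _), cos_odd_mul_pi_div_two hp]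
        simp [mul_assoc]
    _ = p * (π / 2) * besselJ p x := by
        rw [besselJ_eq_integral_sin_mul_sin_of_odd hp]
        field_simp

lemma cosineTransform_cos_odd_mul_arcsin_eq_besselJ_div {x : ℝ} (hx : x ≠ 0) :
    cosineTransform (fun u ↦ cos (p * arcsin u)) x = p * (π / 2) * (besselJ p x / x) := by
  rw [← mul_div_assoc, ← mul_cosineTransform_cos_odd_mul_arcsin hp, mul_div_cancel_left₀ _ hx]

lemma integrable_cosineTransform_cos_odd_mul_arcsin :
    Integrable (cosineTransform fun u ↦ cos (p * arcsin u)) := by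
  refine (continuous_cosineTransform (integrable_cos_odd_mul_arcsin hp).integrableOn)
    |>.locallyIntegrable.integrable_of_isBigO_atTop_of_norm_isNegInvariant
    (g := fun x ↦ x ^ (-(3 / 2) : ℝ)) ?_ ?_ ?_
  · exact .of_forall fun x ↦ congrArg norm (even_cosineTransform _ x).symm
  · refine ((besselJ_isBigO_atTop_of_odd hp).mul
      (isBigO_refl (fun x : ℝ ↦ x⁻¹) atTop)).const_mul_left (p * (π / 2)) |>.congr' ?_ ?_
    · filter_upwards [eventually_ne_atTop 0] with x hx
      rw [cosineTransform_cos_odd_mul_arcsin_eq_besselJ_div hp hx, div_eq_mul_inv (besselJ p x)]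
    · filter_upwards [eventually_gt_atTop 0] with x hx
      rw [← div_eq_mul_inv, ← rpow_sub_one hx.ne']
      norm_num
  · exact integrableAtFilter_rpow_atTop_iff.2 (by norm_num)

theorem integral_cos_mul_besselJ_div_self_general (a : ℝ) :
    ∫ x in Ioi 0, cos (a * x) * besselJ p x / x =
      if |a| ≤ 1 then 1 / (p : ℝ) * cos (p * arcsin a) else 0 := by
  set f : ℝ → ℝ := fun u ↦ cos (p * arcsin u) with hf
  have hp0 : (p : ℝ) ≠ 0 := Int.cast_ne_zero.2 fun h0 ↦ by simp [h0] at hp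
  have heven : f.Even := fun u ↦ by simp only [hf, arcsin_neg, mul_neg, cos_neg]
  have hinv : cosineTransform (cosineTransform f) a = π / 2 * f a :=
    cosineTransform_cosineTransform heven (continuous_cos_mul_arcsin p)
      (integrable_cos_odd_mul_arcsin hp) (integrable_cosineTransform_cos_odd_mul_arcsin hp) a
  calc ∫ x in Ioi 0, cos (a * x) * besselJ p x / x
      = ∫ x in Ioi 0, 2 / (p * π) * (cos (a * x) * cosineTransform f x) := by
        refine setIntegral_congr_fun measurableSet_Ioi fun x hx ↦ ?_
        rw [cosineTransform_cos_odd_mul_arcsin_eq_besselJ_div hp hx.ne']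
        field_simp
    _ = 2 / (p * π) * cosineTransform (cosineTransform f) a := integral_const_mul _ _
    _ = 1 / p * f a := by
        rw [hinv]
        field_simp
    _ = if |a| ≤ 1 then 1 / (p : ℝ) * cos (p * arcsin a) else 0 := by
        split_ifs with ha
        · rfl
        · simp only [hf, cos_odd_mul_arcsin_of_one_le_abs hp (not_le.1 ha).le, mul_zero]

end OddOrder

/-- For `a ∈ (0,1)` and odd integer `p`,
`∫₀^∞ cos(ax) J_p(x)/x dx = (1/p) cos(p arcsin a)`. -/
theorem integral_cos_mul_besselJ_div_self (a : ℝ) (ha0 : 0 < a) (ha1 : a < 1)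
    (p : ℤ) (hp : Odd p) :
    ∫ x in Set.Ioi (0 : ℝ), Real.cos (a * x) * besselJ p x / x =
      (1 / (p : ℝ)) * Real.cos (p * Real.arcsin a) := by
  rw [integral_cos_mul_besselJ_div_self_general hp, if_pos (abs_le.2 ⟨by linarith, ha1.le⟩)]
end
end
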